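/- Let μ, ν ∈ ℝ. The double inequality (x² + μx + 12)/(12x⁴(x+1)²) < [ψ'(x)]² + ψ''(x) < (x² + νx + 12)/(12x⁴(x+1)²) holds for all x ∈ (0,∞) if and only if μ ≤ 0 and ν ≥ 4. -/

import Mathlib

/-- The digamma function `ψ(x) = Γ'(x)/Γ(x)`. -/
noncomputable def digamma (x : ℝ) : ℝ := deriv Real.Gamma x / Real.Gamma x

/-!
The function `F = ψ'² + ψ''` is characterised by a second-order difference equation: the weighted
difference `D F (x) = x² (F x - F (x + 1))` equals `2 (ψ' x - 1/x) - 1/x²`, and therefore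
`D F (x) - D F (x + 1) = 1 / (x² (x + 1)²)`. Since `F` and `D F` vanish at infinity along integer
shifts, telescoping twice turns a comparison of `D f (x) - D f (x + 1)` with `1 / (x² (x + 1)²)`
into a comparison of `f` with `F`. For `f x = (a x² + b x + c) / (12 x⁴ (x + 1)²)` this is a
polynomial inequality in `x`. The choices `(1, 0, 12)` and `(1, 4, 12)` of `(a, b, c)` give the
double inequality; `(4, 0, 12)` and `(1, 4, 0)` bound `F` from the other side sharply enough near
`0` and near `∞` to show that `μ ≤ 0` and `ν ≥ 4` are necessary.
-/

open Filter Set Topology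

/-! ### Comparison of functions through their differences -/

/-- A real function tends to zero along every sequence `x, x + 1, x + 2, …` with `x > 0`: the
decay at infinity that telescoping requires. -/
def VanishesOnShifts (f : ℝ → ℝ) : Prop :=
  ∀ ⦃x : ℝ⦄, 0 < x → Tendsto (fun n : ℕ => f (x + n)) atTop (𝓝 0)

theorem VanishesOnShifts.of_tendsto_atTop {f : ℝ → ℝ} (hf : Tendsto f atTop (𝓝 0)) :
    VanishesOnShifts f := fun x _ =>
  hf.comp (tendsto_atTop_add_const_left _ x tendsto_natCast_atTop_atTop)

theorem VanishesOnShifts.lt_of_sub_add_one_lt {f g : ℝ → ℝ} (hf : VanishesOnShifts f)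
    (hg : VanishesOnShifts g) (h : ∀ x, 0 < x → f x - f (x + 1) < g x - g (x + 1))
    {x : ℝ} (hx : 0 < x) : f x < g x := by
  have hanti : StrictAnti fun n : ℕ => g (x + n) - f (x + n) := by
    refine strictAnti_nat_of_succ_lt fun n => ?_
    have := h (x + n) (by positivity)
    push_cast
    rw [← add_assoc]
    linarith
  have hlim : Tendsto (fun n : ℕ => g (x + n) - f (x + n)) atTop (𝓝 0) := by
    simpa only [sub_zero] using (hg hx).sub (hf hx)
  have hpos := (hanti.antitone.le_of_tendsto hlim 1).trans_lt (hanti zero_lt_one)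
  simpa only [Nat.cast_zero, add_zero, sub_pos] using hpos

/-- The difference operator `x² (f x - f (x + 1))`; the weight `x²` is the one for which it maps
`ψ'² + ψ''` to an expression linear in `ψ'`. -/
def weightedDiff (f : ℝ → ℝ) (x : ℝ) : ℝ := x ^ 2 * (f x - f (x + 1))

theorem lt_of_weightedDiff_sub_add_one_lt {f g : ℝ → ℝ} (hf : VanishesOnShifts f)
    (hg : VanishesOnShifts g) (hdf : VanishesOnShifts (weightedDiff f))
    (hdg : VanishesOnShifts (weightedDiff g))
    (h : ∀ x, 0 < x → weightedDiff f x - weightedDiff f (x + 1) <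
      weightedDiff g x - weightedDiff g (x + 1))
    {x : ℝ} (hx : 0 < x) : f x < g x :=
  hf.lt_of_sub_add_one_lt hg (fun _ hy =>
    lt_of_mul_lt_mul_left (hdf.lt_of_sub_add_one_lt hdg h hy) (sq_nonneg _)) hx

/-! ### The sums `∑ 1 / (x + n) ^ k` -/

/-- The Hurwitz zeta value `ζ(k, x) = ∑ₙ 1 / (x + n) ^ k` at an integer `k` and a real `x`; it is
meaningful for `2 ≤ k` and `0 < x`, and is a junk value where the series diverges. -/
noncomputable def hurwitzSum (k : ℕ) (x : ℝ) : ℝ := ∑' n : ℕ, 1 / (x + n) ^ k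

theorem summable_one_div_add_nat_pow {k : ℕ} (hk : 2 ≤ k) {x : ℝ} (hx : 0 < x) :
    Summable fun n : ℕ => 1 / (x + n) ^ k := by
  refine ((Real.summable_one_div_nat_add_rpow x k).2 (by exact_mod_cast hk)).congr fun n => ?_
  rw [abs_of_pos (by positivity), Real.rpow_natCast, add_comm]

theorem hurwitzSum_eq_add {k : ℕ} (hk : 2 ≤ k) {x : ℝ} (hx : 0 < x) :
    hurwitzSum k x = 1 / x ^ k + hurwitzSum k (x + 1) := by
  simp only [hurwitzSum, (summable_one_div_add_nat_pow hk hx).tsum_eq_zero_add, Nat.cast_zero,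
    add_zero, Nat.cast_add_one, add_assoc, add_comm (1 : ℝ)]

theorem vanishesOnShifts_hurwitzSum (k : ℕ) : VanishesOnShifts (hurwitzSum k) := by
  intro x _
  refine (tendsto_sum_nat_add fun n : ℕ => 1 / (x + n) ^ k).congr fun n => tsum_congr fun m => ?_
  rw [Nat.cast_add, add_comm (m : ℝ), add_assoc]

theorem hasDerivAt_neg_one_div_add_pow (k : ℕ) {a x : ℝ} (h : x + a ≠ 0) :
    HasDerivAt (fun z => -(1 / (z + a) ^ k)) (k * (1 / (x + a) ^ (k + 1))) x := by
  have hpow := (((hasDerivAt_id x).add_const a).fun_pow k).fun_inv (pow_ne_zero k h)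
  simp only [one_div]
  refine hpow.fun_neg.congr_deriv ?_
  rcases k with _ | k
  · simp
  · simp only [id_eq, Nat.add_sub_cancel]
    field_simp
    ring

-- Subtracting the value at `x` makes the series converge for `k = 1` too, which is the case of `ψ`.
theorem hasDerivAt_tsum_one_div_pow_sub {k : ℕ} (hk : 1 ≤ k) {x : ℝ} (hx : 0 < x) :
    HasDerivAt (fun z => ∑' n : ℕ, (1 / (x + n) ^ k - 1 / (z + n) ^ k))
      (k * hurwitzSum (k + 1) x) x := by
  have hmem : x ∈ Ioi (x / 2) := half_lt_self hx
  have hbound : Summable fun n : ℕ => k * (1 / (x / 2 + n) ^ (k + 1)) :=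
    (summable_one_div_add_nat_pow (by lia) (half_pos hx)).mul_left _
  rw [hurwitzSum, ← tsum_mul_left]
  refine hasDerivAt_tsum_of_isPreconnected
    (g := fun (n : ℕ) z => 1 / (x + n) ^ k - 1 / (z + n) ^ k)
    (g' := fun (n : ℕ) z => k * (1 / (z + n) ^ (k + 1))) hbound isOpen_Ioi isPreconnected_Ioi
    (fun n z hz => ?_) (fun n z hz => ?_) hmem (by simp) hmem
  all_goals have hz0 : 0 < z := (half_pos hx).trans hz
  · simpa only [sub_eq_add_neg] using
      (hasDerivAt_neg_one_div_add_pow k (by positivity : z + (n : ℝ) ≠ 0)).const_add _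
  · rw [Real.norm_of_nonneg (by positivity)]
    gcongr
    exact hz.le

theorem hasDerivAt_hurwitzSum {k : ℕ} (hk : 2 ≤ k) {x : ℝ} (hx : 0 < x) :
    HasDerivAt (hurwitzSum k) (-(k * hurwitzSum (k + 1) x)) x := by
  refine ((hasDerivAt_tsum_one_div_pow_sub (one_le_two.trans hk) hx).const_sub
    (hurwitzSum k x)).congr_of_eventuallyEq ?_
  filter_upwards [lt_mem_nhds hx] with z hz
  rw [(summable_one_div_add_nat_pow hk hx).tsum_sub (summable_one_div_add_nat_pow hk hz)]
  exact (sub_sub_cancel _ _).symm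

/-! ### The digamma function and its derivatives -/

theorem differentiableAt_Gamma_of_pos {x : ℝ} (hx : 0 < x) : DifferentiableAt ℝ Real.Gamma x :=
  Real.differentiableAt_Gamma fun n => by linarith [n.cast_nonneg (α := ℝ)]

theorem hasDerivAt_log_Gamma {x : ℝ} (hx : 0 < x) :
    HasDerivAt (Real.log ∘ Real.Gamma) (digamma x) x :=
  (differentiableAt_Gamma_of_pos hx).hasDerivAt.log (Real.Gamma_pos_of_pos hx).ne'

theorem monotoneOn_digamma : MonotoneOn digamma (Ioi 0) :=
  (Real.convexOn_log_Gamma.monotoneOn_deriv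
    fun _ hx => (hasDerivAt_log_Gamma hx).differentiableAt).congr
    fun _ hx => (hasDerivAt_log_Gamma hx).deriv

theorem digamma_add_one {x : ℝ} (hx : 0 < x) : digamma (x + 1) = digamma x + 1 / x := by
  have hshift : HasDerivAt (fun y => (Real.log ∘ Real.Gamma) (y + 1)) (digamma (x + 1)) x :=
    (hasDerivAt_log_Gamma (by positivity)).comp_add_const x 1
  have hsum := (hasDerivAt_log_Gamma hx).add (Real.hasDerivAt_log hx.ne')
  rw [one_div]
  refine hshift.unique (hsum.congr_of_eventuallyEq ?_)
  filter_upwards [lt_mem_nhds hx] with y hy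
  simp only [Function.comp_apply, Pi.add_apply]
  rw [Real.Gamma_add_one hy.ne', Real.log_mul hy.ne' (Real.Gamma_pos_of_pos hy).ne', add_comm]

theorem digamma_add_natCast {x : ℝ} (hx : 0 < x) (n : ℕ) :
    digamma (x + n) = digamma x + ∑ k ∈ Finset.range n, 1 / (x + k) := by
  induction n with
  | zero => simp
  | succ n ih =>
    rw [Nat.cast_succ, ← add_assoc, digamma_add_one (by positivity), ih, Finset.sum_range_succ,
      add_assoc]

theorem tendsto_digamma_add_natCast_sub {x y : ℝ} (hy : 0 < y) (hyx : y ≤ x) :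
    Tendsto (fun n : ℕ => digamma (x + n) - digamma (y + n)) atTop (𝓝 0) := by
  obtain ⟨m, hm⟩ := exists_nat_ge (x - y)
  have hsum : Tendsto (fun n : ℕ => ∑ k ∈ Finset.range m, 1 / (y + n + k)) atTop (𝓝 0) := by
    rw [← Finset.sum_const_zero (s := Finset.range m)]
    refine tendsto_finsetSum _ fun k _ => tendsto_const_nhds.div_atTop ?_
    exact tendsto_atTop_add_const_right _ _
      (tendsto_atTop_add_const_left _ y tendsto_natCast_atTop_atTop)
  refine squeeze_zero (fun n => ?_) (fun n => ?_) hsum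
  all_goals have hyn : 0 < y + n := by positivity
  · exact sub_nonneg.2 (monotoneOn_digamma hyn (hyn.trans_le (by gcongr)) (by gcongr))
  · rw [sub_le_iff_le_add', ← digamma_add_natCast hyn]
    exact monotoneOn_digamma (hyn.trans_le (by gcongr)) (by simp only [mem_Ioi]; positivity)
      (by linarith)

theorem hasSum_digamma_sub {x y : ℝ} (hx : 0 < x) (hy : 0 < y) :
    HasSum (fun n : ℕ => 1 / (y + n) - 1 / (x + n)) (digamma x - digamma y) := by
  wlog hyx : y ≤ x generalizing x y
  · simpa only [neg_sub] using (this hy hx (le_of_not_ge hyx)).neg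
  rw [hasSum_iff_tendsto_nat_of_nonneg fun n => sub_nonneg.2 (by gcongr)]
  have hlim := (tendsto_digamma_add_natCast_sub hy hyx).const_sub (digamma x - digamma y)
  rw [sub_zero] at hlim
  refine hlim.congr fun n => ?_
  rw [digamma_add_natCast hx, digamma_add_natCast hy, Finset.sum_sub_distrib]
  ring

theorem hasDerivAt_digamma {x : ℝ} (hx : 0 < x) : HasDerivAt digamma (hurwitzSum 2 x) x := by
  have h := (hasDerivAt_tsum_one_div_pow_sub le_rfl hx).const_add (digamma x)
  rw [Nat.cast_one, one_mul] at h
  refine h.congr_of_eventuallyEq ?_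
  filter_upwards [lt_mem_nhds hx] with z hz
  simp only [pow_one, (hasSum_digamma_sub hz hx).tsum_eq, add_sub_cancel]

theorem deriv_digamma {x : ℝ} (hx : 0 < x) : deriv digamma x = hurwitzSum 2 x :=
  (hasDerivAt_digamma hx).deriv

theorem deriv_deriv_digamma {x : ℝ} (hx : 0 < x) :
    deriv (deriv digamma) x = -(2 * hurwitzSum 3 x) := by
  have hev : deriv digamma =ᶠ[𝓝 x] hurwitzSum 2 := by
    filter_upwards [lt_mem_nhds hx] with y hy using deriv_digamma hy
  exact hev.deriv_eq.trans (hasDerivAt_hurwitzSum le_rfl hx).deriv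

/-! ### The function `ψ'² + ψ''` -/

/-- The function `ψ'² + ψ''` on the positive half-line, through the series of `ψ'` and `ψ''`. -/
noncomputable def trigammaSqAddTetragamma (x : ℝ) : ℝ := hurwitzSum 2 x ^ 2 - 2 * hurwitzSum 3 x

theorem deriv_digamma_sq_add_deriv_deriv {x : ℝ} (hx : 0 < x) :
    deriv digamma x ^ 2 + deriv (deriv digamma) x = trigammaSqAddTetragamma x := by
  rw [deriv_digamma hx, deriv_deriv_digamma hx, trigammaSqAddTetragamma, sub_eq_add_neg]

theorem vanishesOnShifts_trigammaSqAddTetragamma :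
    VanishesOnShifts trigammaSqAddTetragamma := fun x hx => by
  simpa [trigammaSqAddTetragamma] using ((vanishesOnShifts_hurwitzSum 2 hx).pow 2).sub
    ((vanishesOnShifts_hurwitzSum 3 hx).const_mul 2)

theorem weightedDiff_trigammaSqAddTetragamma {x : ℝ} (hx : 0 < x) :
    weightedDiff trigammaSqAddTetragamma x = 2 * (hurwitzSum 2 x - 1 / x) - (1 / x) ^ 2 := by
  rw [weightedDiff, trigammaSqAddTetragamma, trigammaSqAddTetragamma, hurwitzSum_eq_add le_rfl hx,
    hurwitzSum_eq_add (Nat.le_succ 2) hx]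
  field_simp
  ring

theorem vanishesOnShifts_weightedDiff_trigammaSqAddTetragamma :
    VanishesOnShifts (weightedDiff trigammaSqAddTetragamma) := by
  intro x hx
  have hinv : VanishesOnShifts fun z => 1 / z :=
    .of_tendsto_atTop (tendsto_const_nhds.div_atTop tendsto_id)
  have hlim := (((vanishesOnShifts_hurwitzSum 2 hx).sub (hinv hx)).const_mul 2).sub
    ((hinv hx).pow 2)
  norm_num only at hlim
  refine hlim.congr fun n => ?_
  rw [weightedDiff_trigammaSqAddTetragamma (by positivity)]

theorem weightedDiff_trigammaSqAddTetragamma_sub_add_one {x : ℝ} (hx : 0 < x) :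
    weightedDiff trigammaSqAddTetragamma x - weightedDiff trigammaSqAddTetragamma (x + 1) =
      1 / (x ^ 2 * (x + 1) ^ 2) := by
  rw [weightedDiff_trigammaSqAddTetragamma hx,
    weightedDiff_trigammaSqAddTetragamma (by positivity), hurwitzSum_eq_add le_rfl hx]
  field_simp
  ring

/-! ### Rational bounds -/

/-- The rational functions `(a x² + b x + c) / (12 x⁴ (x + 1)²)` with which `ψ'² + ψ''` is
compared. -/
noncomputable def rationalBound (a b c x : ℝ) : ℝ :=
  (a * x ^ 2 + b * x + c) / (12 * x ^ 4 * (x + 1) ^ 2)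

theorem tendsto_atTop_zero_of_eq_comp_inv {f g : ℝ → ℝ} (hg : ContinuousAt g 0) (hg0 : g 0 = 0)
    (hfg : ∀ x, 0 < x → f x = g x⁻¹) : Tendsto f atTop (𝓝 0) := by
  have hlim := hg.tendsto.comp tendsto_inv_atTop_zero
  rw [hg0] at hlim
  refine hlim.congr' ?_
  filter_upwards [eventually_gt_atTop 0] with x hx using (hfg x hx).symm

theorem vanishesOnShifts_rationalBound (a b c : ℝ) : VanishesOnShifts (rationalBound a b c) := by
  refine .of_tendsto_atTop (tendsto_atTop_zero_of_eq_comp_inv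
    (g := fun t => t ^ 4 * (a + b * t + c * t ^ 2) / (12 * (1 + t) ^ 2)) ?_ (by norm_num)
    fun x hx => ?_)
  · fun_prop (disch := norm_num)
  · rw [rationalBound]
    field_simp

theorem vanishesOnShifts_weightedDiff_rationalBound (a b c : ℝ) :
    VanishesOnShifts (weightedDiff (rationalBound a b c)) := by
  refine .of_tendsto_atTop (tendsto_atTop_zero_of_eq_comp_inv
    (g := fun t => t ^ 2 * ((a + b * t + c * t ^ 2) / (12 * (1 + t) ^ 2) -
      (a * (1 + t) ^ 2 + b * t * (1 + t) + c * t ^ 2) / (12 * (1 + t) ^ 4 * (1 + 2 * t) ^ 2)))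
    ?_ (by norm_num) fun x hx => ?_)
  · fun_prop (disch := norm_num)
  · simp only [weightedDiff, rationalBound, add_assoc x 1 1, one_add_one_eq_two]
    field_simp

/-- The numerator of `D f (x) - D f (x + 1)` for `D = weightedDiff` and `f = rationalBound a b c`,
over the denominator `12 (x + 1)² (x + 2)⁴ (x + 3)² · x² (x + 1)²`. -/
def secondDiffNumerator (a b c x : ℝ) : ℝ :=
  a * (112 * x ^ 2 + 496 * x ^ 3 + 892 * x ^ 4 + 832 * x ^ 5 + 424 * x ^ 6 + 112 * x ^ 7 +
    12 * x ^ 8) +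
  b * (144 * x + 638 * x ^ 2 + 1181 * x ^ 3 + 1155 * x ^ 4 + 623 * x ^ 5 + 175 * x ^ 6 +
    20 * x ^ 7) +
  c * (144 + 672 * x + 1301 * x ^ 2 + 1354 * x ^ 3 + 787 * x ^ 4 + 240 * x ^ 5 + 30 * x ^ 6)

theorem weightedDiff_rationalBound_sub_add_one (a b c : ℝ) {x : ℝ} (hx : 0 < x) :
    weightedDiff (rationalBound a b c) x - weightedDiff (rationalBound a b c) (x + 1) =
      secondDiffNumerator a b c x / (12 * (x + 1) ^ 2 * (x + 2) ^ 4 * (x + 3) ^ 2) /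
        (x ^ 2 * (x + 1) ^ 2) := by
  simp only [weightedDiff, rationalBound, secondDiffNumerator, add_assoc x]
  norm_num only
  field_simp
  ring

theorem rationalBound_lt_of_secondDiffNumerator_lt {a b c : ℝ}
    (h : ∀ x, 0 < x →
      secondDiffNumerator a b c x < 12 * (x + 1) ^ 2 * (x + 2) ^ 4 * (x + 3) ^ 2)
    {x : ℝ} (hx : 0 < x) : rationalBound a b c x < trigammaSqAddTetragamma x := by
  refine lt_of_weightedDiff_sub_add_one_lt (vanishesOnShifts_rationalBound a b c)
    vanishesOnShifts_trigammaSqAddTetragamma (vanishesOnShifts_weightedDiff_rationalBound a b c)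
    vanishesOnShifts_weightedDiff_trigammaSqAddTetragamma (fun y hy => ?_) hx
  rw [weightedDiff_rationalBound_sub_add_one a b c hy,
    weightedDiff_trigammaSqAddTetragamma_sub_add_one hy]
  gcongr
  exact (div_lt_one (by positivity)).2 (h y hy)

theorem lt_rationalBound_of_lt_secondDiffNumerator {a b c : ℝ}
    (h : ∀ x, 0 < x →
      12 * (x + 1) ^ 2 * (x + 2) ^ 4 * (x + 3) ^ 2 < secondDiffNumerator a b c x)
    {x : ℝ} (hx : 0 < x) : trigammaSqAddTetragamma x < rationalBound a b c x := by
  refine lt_of_weightedDiff_sub_add_one_lt vanishesOnShifts_trigammaSqAddTetragamma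
    (vanishesOnShifts_rationalBound a b c) vanishesOnShifts_weightedDiff_trigammaSqAddTetragamma
    (vanishesOnShifts_weightedDiff_rationalBound a b c) (fun y hy => ?_) hx
  rw [weightedDiff_rationalBound_sub_add_one a b c hy,
    weightedDiff_trigammaSqAddTetragamma_sub_add_one hy]
  gcongr
  exact (one_lt_div (by positivity)).2 (h y hy)

theorem rationalBound_one_zero_twelve_lt {x : ℝ} (hx : 0 < x) :
    rationalBound 1 0 12 x < trigammaSqAddTetragamma x := by
  refine rationalBound_lt_of_secondDiffNumerator_lt (fun y hy => sub_pos.1 ?_) hx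
  rw [secondDiffNumerator]
  ring_nf
  positivity

theorem rationalBound_one_four_zero_lt {x : ℝ} (hx : 0 < x) :
    rationalBound 1 4 0 x < trigammaSqAddTetragamma x := by
  refine rationalBound_lt_of_secondDiffNumerator_lt (fun y hy => sub_pos.1 ?_) hx
  rw [secondDiffNumerator]
  ring_nf
  positivity

theorem lt_rationalBound_one_four_twelve {x : ℝ} (hx : 0 < x) :
    trigammaSqAddTetragamma x < rationalBound 1 4 12 x := by
  refine lt_rationalBound_of_lt_secondDiffNumerator (fun y hy => sub_pos.1 ?_) hx
  rw [secondDiffNumerator]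
  ring_nf
  positivity

theorem lt_rationalBound_four_zero_twelve {x : ℝ} (hx : 0 < x) :
    trigammaSqAddTetragamma x < rationalBound 4 0 12 x := by
  refine lt_rationalBound_of_lt_secondDiffNumerator (fun y hy => sub_pos.1 ?_) hx
  rw [secondDiffNumerator]
  ring_nf
  positivity

theorem rationalBound_lt_rationalBound_iff {a₁ b₁ c₁ a₂ b₂ c₂ x : ℝ} (hx : 0 < x) :
    rationalBound a₁ b₁ c₁ x < rationalBound a₂ b₂ c₂ x ↔
      a₁ * x ^ 2 + b₁ * x + c₁ < a₂ * x ^ 2 + b₂ * x + c₂ :=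
  div_lt_div_iff_of_pos_right (by positivity)

theorem rationalBound_mono {a b₁ b₂ c x : ℝ} (hx : 0 < x) (hb : b₁ ≤ b₂) :
    rationalBound a b₁ c x ≤ rationalBound a b₂ c x := by
  unfold rationalBound
  gcongr

/-! ### Optimality of the linear coefficients -/

theorem nonpos_of_forall_rationalBound_lt {b : ℝ}
    (h : ∀ x, 0 < x → rationalBound 1 b 12 x < trigammaSqAddTetragamma x) : b ≤ 0 := by
  by_contra! hb
  have hx : 0 < b / 3 := by positivity
  have hlt := (rationalBound_lt_rationalBound_iff hx).1
    ((h _ hx).trans (lt_rationalBound_four_zero_twelve hx))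
  linarith

theorem four_le_of_forall_lt_rationalBound {b : ℝ}
    (h : ∀ x, 0 < x → trigammaSqAddTetragamma x < rationalBound 1 b 12 x) : 4 ≤ b := by
  by_contra! hb
  have hx : 0 < 12 / (4 - b) := div_pos (by norm_num) (sub_pos.2 hb)
  have hlt := (rationalBound_lt_rationalBound_iff hx).1
    ((rationalBound_one_four_zero_lt hx).trans (h _ hx))
  have hmul : 12 / (4 - b) * (4 - b) = 12 := div_mul_cancel₀ _ (sub_pos.2 hb).ne'
  linarith

theorem stmt_2 (mu nu : ℝ) :
    (∀ x : ℝ, x ∈ Set.Ioi (0 : ℝ) →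
      (x ^ 2 + mu * x + 12) / (12 * x ^ 4 * (x + 1) ^ 2) <
        (deriv digamma x) ^ 2 + deriv (deriv digamma) x ∧
      (deriv digamma x) ^ 2 + deriv (deriv digamma) x <
        (x ^ 2 + nu * x + 12) / (12 * x ^ 4 * (x + 1) ^ 2)) ↔
    mu ≤ 0 ∧ 4 ≤ nu := by
  have hbound (b x : ℝ) :
      (x ^ 2 + b * x + 12) / (12 * x ^ 4 * (x + 1) ^ 2) = rationalBound 1 b 12 x := by
    rw [rationalBound, one_mul]
  simp only [hbound]
  constructor
  · intro h
    exact ⟨nonpos_of_forall_rationalBound_lt fun x hx =>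
        deriv_digamma_sq_add_deriv_deriv hx ▸ (h x hx).1,
      four_le_of_forall_lt_rationalBound fun x hx =>
        deriv_digamma_sq_add_deriv_deriv hx ▸ (h x hx).2⟩
  · rintro ⟨hmu, hnu⟩ x hx
    rw [deriv_digamma_sq_add_deriv_deriv hx]
    exact ⟨(rationalBound_mono hx hmu).trans_lt (rationalBound_one_zero_twelve_lt hx),
      (lt_rationalBound_one_four_twelve hx).trans_le (rationalBound_mono hx hnu)⟩
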